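/- Let m ≥ r ≥ 2 be integers and let F be a nondegenerate r-graph on m vertices. Suppose there exists a constant c > 0 such that for all sufficiently large n: (a) F is (c·C(n,r−1), ((1−π(F))/(4m))·C(n,r−1))-bounded, and (b) ex(n,F) is ((1−π(F))/(8m))·C(n,r−1)-smooth. Then there exists N_0 such that for all integers n ≥ N_0 and all integers t with 0 ≤ t ≤ min{ c·n/(4·e·r·m), (1−π(F))·n/(64·r·m²) }, one has EX(n,(t+1)F) = K_t^r ⋈ EX(n−t,F), and in particular ex(n,(t+1)F) = C(n,r) − C(n−t,r) + ex(n−t,F). -/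

import Mathlib

open Filter

namespace DensityCH

/-- An `r`-uniform hypergraph with vertices in `ℕ`:
a finite vertex set together with a set of `r`-element edges. -/
structure HGraph (r : ℕ) where
  verts : Finset ℕ
  edges : Finset (Finset ℕ)
  edges_sub : ∀ e ∈ edges, e ⊆ verts
  edges_card : ∀ e ∈ edges, e.card = r

namespace HGraph

/-- Build an `r`-graph from a vertex set and a set of candidate edges,
keeping exactly the well-formed candidates. -/
def ofEdges (r : ℕ) (V : Finset ℕ) (E : Finset (Finset ℕ)) : HGraph r where
  verts := V
  edges := E.filter fun e => e ⊆ V ∧ e.card = r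
  edges_sub := fun e he => ((Finset.mem_filter.mp he).2).1
  edges_card := fun e he => ((Finset.mem_filter.mp he).2).2

variable {r : ℕ}

/-- `H` contains a copy of `F`, i.e. a subgraph isomorphic to `F`. -/
def IsCopyIn (F H : HGraph r) : Prop :=
  ∃ f : ℕ → ℕ, Set.InjOn f ↑F.verts ∧ (∀ v ∈ F.verts, f v ∈ H.verts) ∧
    ∀ e ∈ F.edges, e.image f ∈ H.edges

/-- The subgraph of `H` induced on `S`. -/
def induce (H : HGraph r) (S : Finset ℕ) : HGraph r :=
  ofEdges r (H.verts ∩ S) (H.edges.filter fun e => e ⊆ S)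

/-- Delete a vertex from `H`. -/
def deleteVert (H : HGraph r) (v : ℕ) : HGraph r :=
  ofEdges r (H.verts.erase v) (H.edges.filter fun e => v ∉ e)

/-- The degree of a vertex. -/
def deg (H : HGraph r) (v : ℕ) : ℕ := (H.edges.filter fun e => v ∈ e).card

/-- The maximum degree `Δ(H)`. -/
def maxDeg (H : HGraph r) : ℕ := H.verts.sup H.deg

/-- The minimum degree `δ(H)`. -/
def minDeg (H : HGraph r) : ℕ :=
  if h : H.verts.Nonempty then H.verts.inf' h H.deg else 0

/-- The average degree `d(H) = r·|E(H)|/|V(H)|`. -/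
noncomputable def avgDeg (H : HGraph r) : ℝ :=
  (r : ℝ) * (H.edges.card : ℝ) / (H.verts.card : ℝ)

/-- `H` contains `k` pairwise vertex-disjoint copies of `F`, i.e. `ν(F,H) ≥ k`. -/
def HasMatching (F H : HGraph r) (k : ℕ) : Prop :=
  ∃ S : Fin k → Finset ℕ,
    (∀ i, S i ⊆ H.verts ∧ (S i).card = F.verts.card) ∧
    (∀ i j, i ≠ j → Disjoint (S i) (S j)) ∧
    ∀ i, F.IsCopyIn (H.induce (S i))

/-- Isomorphism of hypergraphs. -/
def Iso (G H : HGraph r) : Prop :=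
  ∃ f : ℕ → ℕ, Set.BijOn f ↑G.verts ↑H.verts ∧
    ∀ e ∈ Finset.powersetCard r G.verts, (e ∈ G.edges ↔ e.image f ∈ H.edges)

/-- The join `G ⋈ H`: all edges of `G`, all edges of `H`, and all `r`-sets meeting
both vertex sets. -/
def join (G H : HGraph r) : HGraph r :=
  ofEdges r (G.verts ∪ H.verts)
    (G.edges ∪ H.edges ∪ ((Finset.powersetCard r (G.verts ∪ H.verts)).filter
      fun e => (e ∩ G.verts).Nonempty ∧ (e ∩ H.verts).Nonempty))

end HGraph

/-- The complete `r`-graph on a vertex set `S`. -/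
def completeOn (r : ℕ) (S : Finset ℕ) : HGraph r :=
  HGraph.ofEdges r S (Finset.powersetCard r S)

/-- The `r`-graph on `V` with no edges. -/
def emptyOn (r : ℕ) (V : Finset ℕ) : HGraph r := HGraph.ofEdges r V ∅

/-- The Turán number `ex(n,F)`. -/
noncomputable def exN (r n : ℕ) (F : HGraph r) : ℕ :=
  sSup {m | ∃ H : HGraph r, H.verts.card = n ∧ ¬ F.IsCopyIn H ∧ H.edges.card = m}

/-- `d(n,F) = r·ex(n,F)/n`. -/
noncomputable def dN (r n : ℕ) (F : HGraph r) : ℝ := (r : ℝ) * (exN r n F : ℝ) / (n : ℝ)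

/-- `δ(n,F) = ex(n,F) − ex(n−1,F)` (as a real number). -/
noncomputable def deltaN (r n : ℕ) (F : HGraph r) : ℝ := (exN r n F : ℝ) - (exN r (n-1) F : ℝ)

/-- `x` is the Turán density `π(F)`, i.e. the limit of `ex(n,F)/C(n,r)`. -/
def HasTuranDensity (r : ℕ) (F : HGraph r) (x : ℝ) : Prop :=
  Tendsto (fun n : ℕ => (exN r n F : ℝ) / (n.choose r : ℝ)) atTop (nhds x)

/-- `ex(n,(t+1)F)`: the maximum number of edges of an `n`-vertex `r`-graph with no
`t+1` pairwise vertex-disjoint copies of `F`. -/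
noncomputable def exMatchN (r n t : ℕ) (F : HGraph r) : ℕ :=
  sSup {m | ∃ H : HGraph r, H.verts.card = n ∧ ¬ F.HasMatching H (t+1) ∧ H.edges.card = m}

/-- `H ∈ EX(n,F)`. -/
def IsExtremalFree (r n : ℕ) (F H : HGraph r) : Prop :=
  H.verts.card = n ∧ ¬ F.IsCopyIn H ∧ H.edges.card = exN r n F

/-- `H ∈ EX(n,(t+1)F)`. -/
def IsExtremalMatchingFree (r n t : ℕ) (F H : HGraph r) : Prop :=
  H.verts.card = n ∧ ¬ F.HasMatching H (t+1) ∧ H.edges.card = exMatchN r n t F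

/-- `F` is `(f1, f2)`-bounded at `n`. -/
def BoundedAt (r n : ℕ) (F : HGraph r) (f1 f2 : ℝ) : Prop :=
  ∀ H : HGraph r, H.verts.card = n → ¬ F.IsCopyIn H →
    dN r n F - f1 ≤ H.avgDeg → (H.maxDeg : ℝ) ≤ dN r n F + f2

/-- `ex(·,F)` is `g`-smooth at `n`: `|δ(n,F) − d(n−1,F)| ≤ g(n)`. -/
def SmoothAt (r n : ℕ) (F : HGraph r) (g : ℝ) : Prop :=
  |deltaN r n F - dN r (n-1) F| ≤ g

/-- The collection `H 0, …, H t` (on a common vertex set) has a rainbow `F`-matching. -/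
def HasRainbowMatching (r t : ℕ) (F : HGraph r) (H : Fin (t+1) → HGraph r) : Prop :=
  ∃ S : Fin (t+1) → Finset ℕ,
    (∀ i, S i ⊆ (H i).verts ∧ (S i).card = F.verts.card) ∧
    (∀ i j, i ≠ j → Disjoint (S i) (S j)) ∧
    ∀ i, F.IsCopyIn ((H i).induce (S i))

/-!  Patterns -/

/-- An `r`-uniform pattern: a finite index set together with a collection of
`r`-multisets on it. -/
structure Pattern (r : ℕ) where
  idx : Finset ℕ
  mE : Finset (Multiset ℕ)
  card_eq : ∀ s ∈ mE, Multiset.card s = r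
  mem_idx : ∀ s ∈ mE, ∀ i ∈ s, i ∈ idx

namespace Pattern

variable {r : ℕ}

/-- The pattern `P − i`. -/
def erase (P : Pattern r) (i : ℕ) : Pattern r where
  idx := P.idx.erase i
  mE := P.mE.filter fun s => i ∉ s
  card_eq := fun s hs => P.card_eq s (Finset.mem_filter.mp hs).1
  mem_idx := by
    intro s hs j hj
    have h1 := Finset.mem_filter.mp hs
    refine Finset.mem_erase.mpr ⟨?_, P.mem_idx s h1.1 j hj⟩
    rintro rfl
    exact h1.2 hj

/-- `H` is a `P`-construction: a blowup of the pattern `P`. -/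
def IsConstruction (P : Pattern r) (H : HGraph r) : Prop :=
  ∃ part : ℕ → ℕ, (∀ v ∈ H.verts, part v ∈ P.idx) ∧
    ∀ e : Finset ℕ, e ∈ H.edges ↔ (e ⊆ H.verts ∧ e.card = r ∧ Multiset.map part e.val ∈ P.mE)

/-- `H` is a `P`-subconstruction: a subgraph of a `P`-construction. -/
def IsSubconstruction (P : Pattern r) (H : HGraph r) : Prop :=
  ∃ G : HGraph r, P.IsConstruction G ∧ H.verts ⊆ G.verts ∧ H.edges ⊆ G.edges

end Pattern

/-- `Λ(P,n)`: the maximum number of edges of an `n`-vertex `P`-construction. -/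
noncomputable def patEx (r : ℕ) (P : Pattern r) (n : ℕ) : ℕ :=
  sSup {m | ∃ H : HGraph r, P.IsConstruction H ∧ H.verts.card = n ∧ H.edges.card = m}

/-- The Lagrangian `λ(P) = lim Λ(P,n)/C(n,r)`. -/
noncomputable def patLagrangian (r : ℕ) (P : Pattern r) : ℝ :=
  limUnder atTop fun n : ℕ => (patEx r P n : ℝ) / (n.choose r : ℝ)

/-- The pattern `P` is minimal: `λ(P−i) < λ(P)` for all `i`. -/
def Pattern.Minimal {r : ℕ} (P : Pattern r) : Prop :=
  ∀ i ∈ P.idx, patLagrangian r (P.erase i) < patLagrangian r P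

/-- `(F,P)` is a Turán pair. -/
def IsTuranPair (r : ℕ) (F : HGraph r) (P : Pattern r) : Prop :=
  (∀ H : HGraph r, P.IsConstruction H → ¬ F.IsCopyIn H) ∧
  (∀ H : HGraph r, ¬ F.IsCopyIn H → H.edges.card = exN r H.verts.card F →
    P.IsConstruction H)

/-- `F` is edge-stable with respect to `P` (with Turán density `π`). -/
def EdgeStable (r : ℕ) (F : HGraph r) (P : Pattern r) (π : ℝ) : Prop :=
  ∀ δ : ℝ, 0 < δ → ∃ N₀ : ℕ, ∃ ζ : ℝ, 0 < ζ ∧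
    ∀ H : HGraph r, N₀ ≤ H.verts.card → ¬ F.IsCopyIn H →
      (π - ζ) * (H.verts.card.choose r : ℝ) ≤ (H.edges.card : ℝ) →
      ∃ H' : HGraph r, H'.verts ⊆ H.verts ∧ H'.edges ⊆ H.edges ∧
        (π - δ) * (H.verts.card.choose r : ℝ) ≤ (H'.edges.card : ℝ) ∧
        P.IsSubconstruction H'

/-- `F` is weakly vertex-extendable with respect to `P` (with Turán density `π`). -/
def WeaklyVertexExtendable (r : ℕ) (F : HGraph r) (P : Pattern r) (π : ℝ) : Prop :=
  ∀ δ : ℝ, 0 < δ → ∃ N₀ : ℕ, ∃ ζ : ℝ, 0 < ζ ∧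
    ∀ H : HGraph r, N₀ ≤ H.verts.card → ¬ F.IsCopyIn H →
      (π - ζ) * (((H.verts.card - 1).choose (r-1) : ℕ) : ℝ) ≤ (H.minDeg : ℝ) →
      ∀ v ∈ H.verts, P.IsSubconstruction (H.deleteVert v) →
        (H.deg v : ℝ) ≤ (π + δ) * (((H.verts.card - 1).choose (r-1) : ℕ) : ℝ)

/-- `F` is degree-stable with respect to `P` (with Turán density `π`). -/
def DegreeStable (r : ℕ) (F : HGraph r) (P : Pattern r) (π : ℝ) : Prop :=
  ∃ ζ : ℝ, 0 < ζ ∧ ∃ N₀ : ℕ,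
    ∀ H : HGraph r, N₀ ≤ H.verts.card → ¬ F.IsCopyIn H →
      (π - ζ) * (((H.verts.card - 1).choose (r-1) : ℕ) : ℝ) ≤ (H.minDeg : ℝ) →
      P.IsSubconstruction H

/-!  Concrete constructions -/

/-- The generalized Turán graph `T_r(·,ℓ)` on vertex set `V` (parts are residue
classes mod `ℓ`; on an interval these are balanced). -/
def turanOn (r ℓ : ℕ) (V : Finset ℕ) : HGraph r :=
  HGraph.ofEdges r V ((Finset.powersetCard r V).filter
    fun e => ∀ u ∈ e, ∀ v ∈ e, u % ℓ = v % ℓ → u = v)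

/-- The `r`-graph on `V₁ ∪ V₂` whose edges are all `r`-sets meeting both parts. -/
def crossOn (r : ℕ) (V₁ V₂ : Finset ℕ) : HGraph r :=
  HGraph.ofEdges r (V₁ ∪ V₂) ((Finset.powersetCard r (V₁ ∪ V₂)).filter
    fun e => (e ∩ V₁).Nonempty ∧ (e ∩ V₂).Nonempty)

/-- The `r`-graph on `V₁ ∪ V₂` whose edges are all `r`-sets meeting `V₁` in an odd
number of vertices. -/
def oddCross (r : ℕ) (V₁ V₂ : Finset ℕ) : HGraph r :=
  HGraph.ofEdges r (V₁ ∪ V₂) ((Finset.powersetCard r (V₁ ∪ V₂)).filter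
    fun e => Odd (e ∩ V₁).card)

/-- The Fano plane. -/
def fano : HGraph 3 :=
  HGraph.ofEdges 3 (Finset.Icc 1 7)
    {({1,2,3} : Finset ℕ), {3,4,5}, {5,6,1}, {1,7,4}, {2,7,5}, {3,7,6}, {2,4,6}}

/-- The generalized triangle `𝕋_r`, with edges `{1,…,r}`, `{1,…,r−1,r+1}` and
`{r,…,2r−1}`. -/
def genTri (r : ℕ) : HGraph r :=
  HGraph.ofEdges r (Finset.Icc 1 (2*r - 1))
    {Finset.Icc 1 r, Finset.Icc 1 (r-1) ∪ {r+1}, Finset.Icc r (2*r - 1)}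

/-- `G` is a blowup of the `r`-graph `W` (viewing `W` as a pattern). -/
def IsBlowupOf {r : ℕ} (W G : HGraph r) : Prop :=
  ∃ part : ℕ → ℕ, (∀ v ∈ G.verts, part v ∈ W.verts) ∧
    ∀ e : Finset ℕ, e ∈ G.edges ↔
      (e ⊆ G.verts ∧ e.card = r ∧ ∃ f ∈ W.edges, Multiset.map part e.val = f.val)

/-- The expansion `H^F` of an `r`-graph `F`: for every pair of vertices not covered
by an edge of `F`, add an edge consisting of this pair plus `r−2` new vertices,
these sets of new vertices being pairwise disjoint. -/
def HGraph.expansion {r : ℕ} (F : HGraph r) : HGraph r :=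
  HGraph.ofEdges r
    (F.verts ∪ (((F.verts ×ˢ F.verts).filter fun p =>
        p.1 < p.2 ∧ ∀ e ∈ F.edges, ¬ (p.1 ∈ e ∧ p.2 ∈ e)).biUnion fun p =>
      (Finset.range (r-2)).image fun s =>
        (F.verts.sup id + 1) + (p.1 * (F.verts.sup id + 1) + p.2) * r + s))
    (F.edges ∪ (((F.verts ×ˢ F.verts).filter fun p =>
        p.1 < p.2 ∧ ∀ e ∈ F.edges, ¬ (p.1 ∈ e ∧ p.2 ∈ e)).image fun p =>
      insert p.1 (insert p.2 ((Finset.range (r-2)).image fun s =>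
        (F.verts.sup id + 1) + (p.1 * (F.verts.sup id + 1) + p.2) * r + s))))

/-- A `2`-graph is a tree on `k` vertices: `k` vertices, `k−1` edges, connected. -/
def IsTreeGraph (k : ℕ) (T : HGraph 2) : Prop :=
  T.verts.card = k ∧ T.edges.card = k - 1 ∧
  ∀ S : Finset ℕ, S ⊆ T.verts → S.Nonempty → S ≠ T.verts →
    ∃ e ∈ T.edges, (e ∩ S).Nonempty ∧ (e \ S).Nonempty

/-- `T` satisfies the Erdős–Sós property for `k`: every graph with average degree
greater than `k−2` contains `T`. -/
def ErdosSos (k : ℕ) (T : HGraph 2) : Prop :=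
  ∀ G : HGraph 2, ((k : ℝ) - 2) * (G.verts.card : ℝ) < 2 * (G.edges.card : ℝ) →
    T.IsCopyIn G

/-- The `(r−2)`-expansion `Exp(T)` of a `2`-graph `T`: enlarge every edge by one
common fixed set of `r−2` new vertices. -/
def expTree (r : ℕ) (T : HGraph 2) : HGraph r :=
  HGraph.ofEdges r
    (T.verts ∪ ((Finset.range (r-2)).image fun s => T.verts.sup id + 1 + s))
    (T.edges.image fun e =>
      e ∪ ((Finset.range (r-2)).image fun s => T.verts.sup id + 1 + s))

/-- The chromatic number of a `2`-graph. -/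
noncomputable def chrom (F : HGraph 2) : ℕ :=
  sInf {k | ∃ c : ℕ → ℕ, (∀ v ∈ F.verts, c v < k) ∧
    ∀ e ∈ F.edges, ∀ u ∈ e, ∀ v ∈ e, u ≠ v → c u ≠ c v}

/-- A graph is edge-critical if deleting some edge lowers its chromatic number. -/
def EdgeCritical (F : HGraph 2) : Prop :=
  ∃ e ∈ F.edges, chrom (HGraph.ofEdges 2 F.verts (F.edges.erase e)) < chrom F

/-- `H` is semibipartite: the vertex set splits into `V₁ ∪ V₂` so that every edge
has exactly one vertex in `V₁`. -/
def Semibipartite (r : ℕ) (H : HGraph r) : Prop :=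
  ∃ V₁ ⊆ H.verts, ∀ e ∈ H.edges, (e ∩ V₁).card = 1

/-- `H` is a `K_ℓ^r`-subconstruction, i.e. an `ℓ`-partite `r`-graph. -/
def IsKlSub (r ℓ : ℕ) (H : HGraph r) : Prop :=
  ∃ f : ℕ → ℕ, (∀ v ∈ H.verts, f v < ℓ) ∧
    ∀ e ∈ H.edges, ∀ u ∈ e, ∀ v ∈ e, f u = f v → u = v

/-- The Lagrangian `λ(W)` of an `r`-graph `W`, viewing `W` as a pattern. -/
noncomputable def hgLagrangian (r : ℕ) (W : HGraph r) : ℝ :=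
  limUnder atTop fun n : ℕ =>
    ((sSup {m | ∃ G : HGraph r, IsBlowupOf W G ∧ G.verts.card = n ∧ G.edges.card = m} : ℕ) : ℝ)
      / (n.choose r : ℝ)

/-- The `r`-graph `B(r,ℓ+1)`. -/
def BGraph (r ℓ : ℕ) : HGraph r :=
  HGraph.ofEdges r (Finset.Icc 1 (ℓ+1))
    (insert (Finset.Icc 1 r)
      ((Finset.powersetCard r (Finset.Icc 2 (ℓ+1))).filter
        fun e => (e ∩ Finset.Icc 2 r).card ≤ 1))

/-- The `r`-uniform matching of size two, `M_2^r`. -/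
def matching2 (r : ℕ) : HGraph r :=
  HGraph.ofEdges r (Finset.Icc 1 (2*r)) {Finset.Icc 1 r, Finset.Icc (r+1) (2*r)}

/-- The expanded triangle `𝓒_3^{2r}`. -/
def expandedTriangle (r : ℕ) : HGraph (2*r) :=
  HGraph.ofEdges (2*r) (Finset.Icc 1 (3*r))
    {Finset.Icc 1 (2*r), Finset.Icc (r+1) (3*r), Finset.Icc 1 r ∪ Finset.Icc (2*r+1) (3*r)}

/-- The `4`-graph `𝔽_{4,3}`. -/
def F43 : HGraph 4 :=
  HGraph.ofEdges 4 (Finset.Icc 1 7)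
    {({1,2,3,4} : Finset ℕ), {1,2,3,5}, {1,2,3,6}, {1,2,3,7}, {4,5,6,7}}

/-- The `3`-graph `𝔽_{3,2}`. -/
def F32 : HGraph 3 :=
  HGraph.ofEdges 3 (Finset.Icc 1 5)
    {({1,2,3} : Finset ℕ), {1,2,4}, {1,2,5}, {3,4,5}}

/-- `H` contains pairwise vertex-disjoint copies of `F i`, `ts i` many of each. -/
def HasMixedMatching (r k : ℕ) (F : Fin k → HGraph r) (ts : Fin k → ℕ)
    (H : HGraph r) : Prop :=
  ∃ S : (i : Fin k) → Fin (ts i) → Finset ℕ,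
    (∀ i j, S i j ⊆ H.verts ∧ (S i j).card = (F i).verts.card) ∧
    (∀ p q : Σ i : Fin k, Fin (ts i), p ≠ q → Disjoint (S p.1 p.2) (S q.1 q.2)) ∧
    ∀ i j, (F i).IsCopyIn (H.induce (S i j))

/-- `ex(n, ⊔ᵢ tᵢ Fᵢ)`. -/
noncomputable def exMixedN (r k : ℕ) (F : Fin k → HGraph r) (ts : Fin k → ℕ)
    (n : ℕ) : ℕ :=
  sSup {m | ∃ H : HGraph r, H.verts.card = n ∧ ¬ HasMixedMatching r k F ts H ∧
    H.edges.card = m}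

/-- `ex(n, {F₁,…,F_k})`. -/
noncomputable def exFamN (r k : ℕ) (F : Fin k → HGraph r) (n : ℕ) : ℕ :=
  sSup {m | ∃ H : HGraph r, H.verts.card = n ∧ (∀ i, ¬ (F i).IsCopyIn H) ∧
    H.edges.card = m}

/-!
Let `H` be extremal for `t + 1` disjoint copies of `F`, put `m = |V(F)|` and `η = (1 - π)/m`, and
let `L` be the set of vertices of `H` of degree at least `(π + η/2) * C(n,r-1)`. After deleting
any `t * m` vertices, the rest of `H` still has almost extremal density and each remaining vertex
of `L` has a degree too large for boundedness, so the rest contains `F`. Hence a family of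
disjoint copies of `F` avoiding `L` can be enlarged by one copy for each vertex of `L`: at most
`t` vertices are in `L`, and `H - L` has at most `k := t - |L|` disjoint copies of `F`. All copies
of `F` in `H - L` are then destroyed by deleting `k * m` further vertices, all of low degree. By
smoothness, giving up `k * m` low-degree vertices instead of `k` full-degree ones loses edges
compared with `K_t^r ⋈ EX(n-t,F)` unless `k = 0`. So `L` has exactly `t` vertices and meets all
copies of `F`, and counting edges shows that `H` is the join of `K_t^r` with an extremal `F`-free
`r`-graph.
-/

/-! ### Disjoint copies and vertex deletion -/

namespace HGraph

attribute [ext] HGraph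

variable {r k t : ℕ} {F G H : HGraph r} {L S T U e : Finset ℕ}

/-- `G` is a subgraph of `H`, not necessarily induced or spanning; containment of copies and
matchings is monotone for this relation. -/
def IsSubgraph (G H : HGraph r) : Prop :=
  G.verts ⊆ H.verts ∧ G.edges ⊆ H.edges

theorem mem_edges_induce : e ∈ (H.induce S).edges ↔ e ∈ H.edges ∧ e ⊆ S := by
  simp only [induce, ofEdges, Finset.mem_filter, Finset.subset_inter_iff]
  exact ⟨fun h ↦ h.1, fun h ↦ ⟨h, ⟨H.edges_sub e h.1, h.2⟩, H.edges_card e h.1⟩⟩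

theorem IsSubgraph.induce (h : G.IsSubgraph H) (S : Finset ℕ) :
    (G.induce S).IsSubgraph (H.induce S) := by
  refine ⟨Finset.inter_subset_inter_right h.1, fun e he ↦ ?_⟩
  rw [mem_edges_induce] at he ⊢
  exact ⟨h.2 he.1, he.2⟩

theorem IsSubgraph.isCopyIn (h : G.IsSubgraph H) : G.IsCopyIn H :=
  ⟨id, Set.injOn_id _, fun _ hv ↦ h.1 hv, fun e he ↦ by rw [Finset.image_id]; exact h.2 he⟩

theorem IsCopyIn.trans (hFG : F.IsCopyIn G) (hGH : G.IsCopyIn H) : F.IsCopyIn H := by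
  obtain ⟨f, hfinj, hfverts, hfedges⟩ := hFG
  obtain ⟨g, hginj, hgverts, hgedges⟩ := hGH
  refine ⟨g ∘ f, hginj.comp hfinj hfverts, fun v hv ↦ hgverts _ (hfverts v hv), fun e he ↦ ?_⟩
  rw [← Finset.image_image]
  exact hgedges _ (hfedges e he)

theorem IsCopyIn.mono (hF : F.IsCopyIn G) (h : G.IsSubgraph H) : F.IsCopyIn H :=
  hF.trans h.isCopyIn

theorem HasMatching.of_isCopyIn (hF : F.HasMatching G k) (h : G.IsCopyIn H) :
    F.HasMatching H k := by
  obtain ⟨S, hS, hdisj, hcopy⟩ := hF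
  obtain ⟨f, hinj, hverts, hedges⟩ := h
  refine ⟨fun i ↦ (S i).image f, fun i ↦ ⟨?_, ?_⟩, fun i j hij ↦ ?_, fun i ↦
    (hcopy i).trans ⟨f, hinj.mono (by simp [induce, ofEdges]), fun v hv ↦ ?_, fun e he ↦ ?_⟩⟩
  · exact Finset.image_subset_iff.2 fun v hv ↦ hverts v ((hS i).1 hv)
  · rw [Finset.card_image_of_injOn (hinj.mono (Finset.coe_subset.2 (hS i).1)), (hS i).2]
  · rw [Finset.disjoint_iff_inter_eq_empty, ← Finset.image_inter_of_injOn]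
    · rw [Finset.disjoint_iff_inter_eq_empty.1 (hdisj i j hij), Finset.image_empty]
    · exact hinj.mono (by simpa using ⟨(hS i).1, (hS j).1⟩)
  · obtain ⟨hvG, hvS⟩ := Finset.mem_inter.1 hv
    exact Finset.mem_inter.2 ⟨hverts v hvG, Finset.mem_image_of_mem f hvS⟩
  · obtain ⟨heG, heS⟩ := mem_edges_induce.1 he
    exact mem_edges_induce.2 ⟨hedges e heG, Finset.image_subset_image heS⟩

theorem IsCopyIn.exists_induce (h : F.IsCopyIn H) :
    ∃ S ⊆ H.verts, S.card = F.verts.card ∧ F.IsCopyIn (H.induce S) := by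
  obtain ⟨f, hinj, hverts, hedges⟩ := h
  have hsub : F.verts.image f ⊆ H.verts := Finset.image_subset_iff.2 hverts
  refine ⟨F.verts.image f, hsub, Finset.card_image_of_injOn hinj, f, hinj, fun v hv ↦ ?_,
    fun e he ↦ ?_⟩
  · exact Finset.mem_inter.2 ⟨hverts v hv, Finset.mem_image_of_mem f hv⟩
  · exact mem_edges_induce.2 ⟨hedges e he, Finset.image_subset_image (F.edges_sub e he)⟩

/-- The `r`-graph `H - L` obtained from `H` by deleting the vertices of `L` and all edges
meeting `L`. -/
def deleteVerts (H : HGraph r) (L : Finset ℕ) : HGraph r where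
  verts := H.verts \ L
  edges := {e ∈ H.edges | Disjoint e L}
  edges_sub e he := by
    rw [Finset.mem_filter] at he
    exact Finset.subset_sdiff.2 ⟨H.edges_sub e he.1, he.2⟩
  edges_card e he := H.edges_card e (Finset.mem_of_mem_filter e he)

@[simp]
theorem verts_deleteVerts : (H.deleteVerts L).verts = H.verts \ L := rfl

@[simp]
theorem mem_edges_deleteVerts : e ∈ (H.deleteVerts L).edges ↔ e ∈ H.edges ∧ Disjoint e L :=
  Finset.mem_filter

@[simp]
theorem deleteVerts_empty : H.deleteVerts ∅ = H := by
  ext <;> simp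

theorem deleteVerts_deleteVerts : (H.deleteVerts S).deleteVerts T = H.deleteVerts (S ∪ T) := by
  ext <;> simp [and_assoc]

theorem isSubgraph_deleteVerts (h : S ⊆ T) : (H.deleteVerts T).IsSubgraph (H.deleteVerts S) := by
  refine ⟨Finset.sdiff_subset_sdiff subset_rfl h, fun e he ↦ ?_⟩
  rw [mem_edges_deleteVerts] at he ⊢
  exact ⟨he.1, he.2.mono_right h⟩

theorem deleteVerts_isSubgraph : (H.deleteVerts L).IsSubgraph H :=
  ⟨Finset.sdiff_subset, Finset.filter_subset _ _⟩

theorem induce_isSubgraph_deleteVerts (h : Disjoint S L) :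
    (H.induce S).IsSubgraph (H.deleteVerts L) := by
  refine ⟨fun v hv ↦ ?_, fun e he ↦ ?_⟩
  · obtain ⟨hvH, hvS⟩ := Finset.mem_inter.1 hv
    exact Finset.mem_sdiff.2 ⟨hvH, Finset.disjoint_left.1 h hvS⟩
  · obtain ⟨heH, heS⟩ := mem_edges_induce.1 he
    exact mem_edges_deleteVerts.2 ⟨heH, h.mono_left heS⟩

theorem hasMatching_zero : F.HasMatching H 0 :=
  ⟨Fin.elim0, fun i ↦ i.elim0, fun i ↦ i.elim0, fun i ↦ i.elim0⟩

theorem HasMatching.succ (hG : F.HasMatching G k) (hGH : G.IsSubgraph H)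
    (h : ∀ U ⊆ G.verts, U.card = k * F.verts.card → F.IsCopyIn (H.deleteVerts U)) :
    F.HasMatching H (k + 1) := by
  obtain ⟨S, hS, hdisj, hcopy⟩ := hG
  set U := Finset.univ.biUnion S
  have hU : U ⊆ G.verts := Finset.biUnion_subset.2 fun i _ ↦ (hS i).1
  have hUcard : U.card = k * F.verts.card := by
    rw [Finset.card_biUnion fun i _ j _ ↦ hdisj i j, Finset.sum_congr rfl fun i _ ↦ (hS i).2,
      Finset.sum_const, Finset.card_fin, smul_eq_mul]
  obtain ⟨T, hT, hTcard, hTcopy⟩ := (h U hU hUcard).exists_induce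
  have hdisjT : ∀ i, Disjoint T (S i) := fun i ↦
    (Finset.subset_sdiff.1 hT).2.mono_right (Finset.subset_biUnion_of_mem S (Finset.mem_univ i))
  refine ⟨Fin.cons T S, Fin.cases ⟨hT.trans Finset.sdiff_subset, hTcard⟩ fun i ↦
    ⟨(hS i).1.trans hGH.1, (hS i).2⟩, ?_, Fin.cases (hTcopy.mono ?_) fun i ↦
    (hcopy i).mono (hGH.induce _)⟩
  · refine Fin.cases (Fin.cases (fun h ↦ absurd rfl h) fun j _ ↦ hdisjT j) fun i ↦
      Fin.cases (fun _ ↦ (hdisjT i).symm) fun j hij ↦ hdisj i j fun h ↦ hij (h ▸ rfl)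
  · exact deleteVerts_isSubgraph.induce T

theorem exists_not_isCopyIn_deleteVerts (h : ¬ F.HasMatching H (k + 1))
    (hk : k * F.verts.card ≤ H.verts.card) :
    ∃ U ⊆ H.verts, U.card = k * F.verts.card ∧ ¬ F.IsCopyIn (H.deleteVerts U) := by
  induction k with
  | zero =>
    by_contra! hcopy
    exact h (hasMatching_zero.succ ⟨subset_rfl, subset_rfl⟩ hcopy)
  | succ k ih =>
    by_cases hmatch : F.HasMatching H (k + 1)
    · by_contra! hcopy
      exact h (hmatch.succ ⟨subset_rfl, subset_rfl⟩ hcopy)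
    · have hle : k * F.verts.card ≤ (k + 1) * F.verts.card := Nat.mul_le_mul_right _ k.le_succ
      obtain ⟨U, hU, hcard, hcopy⟩ := ih hmatch (hle.trans hk)
      obtain ⟨W, hUW, hW, hWcard⟩ := Finset.exists_subsuperset_card_eq hU (hcard.trans_le hle) hk
      exact ⟨W, hW, hWcard, fun hF ↦ hcopy (hF.mono (isSubgraph_deleteVerts hUW))⟩

theorem HasMatching.absorb (hF : 0 < F.verts.card)
    (hL : ∀ v ∈ L, ∀ U ⊆ H.verts, U.card ≤ t * F.verts.card → v ∉ U →
      F.IsCopyIn (H.deleteVerts U))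
    (hLH : L ⊆ H.verts) (hmatch : F.HasMatching (H.deleteVerts L) k) (hle : L.card + k ≤ t + 1) :
    F.HasMatching H (L.card + k) := by
  induction L using Finset.induction_on generalizing k with
  | empty => simpa using hmatch
  | insert v L hv ih =>
    rw [Finset.card_insert_of_notMem hv] at hle ⊢
    rw [add_right_comm, add_assoc]
    rw [Finset.insert_subset_iff] at hLH
    refine ih (fun w hw ↦ hL w (Finset.mem_insert_of_mem hw)) hLH.2 ?_ (by omega)
    refine hmatch.succ (isSubgraph_deleteVerts (Finset.subset_insert v L)) fun U hU hcard ↦ ?_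
    rw [verts_deleteVerts, Finset.subset_sdiff, Finset.disjoint_insert_right] at hU
    rw [deleteVerts_deleteVerts]
    refine hL v (Finset.mem_insert_self v L) _ (Finset.union_subset hLH.2 hU.1) ?_
      (by simp [hv, hU.2.1])
    calc (L ∪ U).card ≤ L.card + k * F.verts.card := hcard ▸ Finset.card_union_le L U
      _ ≤ L.card * F.verts.card + k * F.verts.card := by gcongr; exact Nat.le_mul_of_pos_right _ hF
      _ ≤ t * F.verts.card := by rw [← add_mul]; gcongr; omega

theorem not_hasMatching_of_not_isCopyIn_deleteVerts (hcard : L.card ≤ t)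
    (h : ¬ F.IsCopyIn (H.deleteVerts L)) : ¬ F.HasMatching H (t + 1) := by
  rintro ⟨S, -, hdisj, hcopy⟩
  have hmeet : ∀ i, ∃ v ∈ S i, v ∈ L := fun i ↦ by
    by_contra! hi
    exact h ((hcopy i).mono (induce_isSubgraph_deleteVerts (Finset.disjoint_left.2 hi)))
  choose v hvS hvL using hmeet
  have hinj : Function.Injective v := fun i j hij ↦ by
    by_contra hne
    exact Finset.disjoint_left.1 (hdisj i j hne) (hvS i) (hij ▸ hvS j)
  have hle := Finset.card_le_card_of_injOn v (s := Finset.univ) (fun i _ ↦ hvL i) hinj.injOn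
  rw [Finset.card_fin] at hle
  omega

end HGraph

/-! ### Counting edges -/

namespace HGraph

variable {r v : ℕ} {G H : HGraph r} {L T U e : Finset ℕ}

theorem mem_powersetCard_verts (he : e ∈ H.edges) : e ∈ H.verts.powersetCard r :=
  Finset.mem_powersetCard.2 ⟨H.edges_sub e he, H.edges_card e he⟩

theorem card_edges_le_choose : H.edges.card ≤ H.verts.card.choose r :=
  (Finset.card_le_card fun _ ↦ mem_powersetCard_verts).trans_eq (Finset.card_powersetCard _ _)

theorem card_filter_superset_edges_le :
    {e ∈ H.edges | T ⊆ e}.card ≤ (H.verts.card - T.card).choose (r - T.card) := by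
  by_cases hT : T ⊆ H.verts
  · rw [← Finset.card_sdiff_of_subset hT, ← Finset.card_powersetCard]
    refine Finset.card_le_card_of_injOn (· \ T) (fun e he ↦ ?_)
      fun e he e' he' (h : e \ T = e' \ T) ↦ ?_
    · obtain ⟨heH, hTe⟩ := Finset.mem_filter.1 he
      exact Finset.mem_powersetCard.2 ⟨Finset.sdiff_subset_sdiff (H.edges_sub e heH) subset_rfl,
        by rw [Finset.card_sdiff_of_subset hTe, H.edges_card e heH]⟩
    · rw [← Finset.sdiff_union_of_subset (Finset.mem_filter.1 he).2, h,
        Finset.sdiff_union_of_subset (Finset.mem_filter.1 he').2]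
  · rw [Finset.filter_false_of_mem fun e he hTe ↦ hT (hTe.trans (H.edges_sub e he))]
    exact Nat.zero_le _

theorem deg_le_choose : H.deg v ≤ (H.verts.card - 1).choose (r - 1) := by
  simpa [deg] using card_filter_superset_edges_le (H := H) (T := {v})

theorem IsSubgraph.deg_le (h : G.IsSubgraph H) : G.deg v ≤ H.deg v :=
  Finset.card_le_card (Finset.filter_subset_filter _ h.2)

theorem deg_le_maxDeg (hv : v ∈ H.verts) : H.deg v ≤ H.maxDeg :=
  Finset.le_sup hv

theorem card_edges_le_add_sum_deg (H : HGraph r) (U : Finset ℕ) :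
    H.edges.card ≤ (H.deleteVerts U).edges.card + ∑ u ∈ U, H.deg u := by
  have hcover : H.edges ⊆
      (H.deleteVerts U).edges ∪ U.biUnion fun u ↦ {e ∈ H.edges | u ∈ e} := fun e he ↦ by
    by_cases hdisj : Disjoint e U
    · exact Finset.mem_union_left _ (mem_edges_deleteVerts.2 ⟨he, hdisj⟩)
    · obtain ⟨u, hue, huU⟩ := Finset.not_disjoint_iff.1 hdisj
      exact Finset.mem_union_right _
        (Finset.mem_biUnion.2 ⟨u, huU, Finset.mem_filter.2 ⟨he, hue⟩⟩)
  calc H.edges.card ≤ _ := Finset.card_le_card hcover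
    _ ≤ _ := Finset.card_union_le _ _
    _ ≤ _ := by gcongr; exact Finset.card_biUnion_le

theorem deg_le_deg_deleteVerts_add (hv : v ∉ U) :
    H.deg v ≤ (H.deleteVerts U).deg v + U.card * (H.verts.card - 2).choose (r - 2) := by
  have hcover : {e ∈ H.edges | v ∈ e} ⊆ {e ∈ (H.deleteVerts U).edges | v ∈ e} ∪
      U.biUnion fun u ↦ {e ∈ H.edges | {v, u} ⊆ e} := fun e he ↦ by
    obtain ⟨heH, hve⟩ := Finset.mem_filter.1 he
    by_cases hdisj : Disjoint e U
    · exact Finset.mem_union_left _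
        (Finset.mem_filter.2 ⟨mem_edges_deleteVerts.2 ⟨heH, hdisj⟩, hve⟩)
    · obtain ⟨u, hue, huU⟩ := Finset.not_disjoint_iff.1 hdisj
      refine Finset.mem_union_right _
        (Finset.mem_biUnion.2 ⟨u, huU, Finset.mem_filter.2 ⟨heH, ?_⟩⟩)
      simp [Finset.insert_subset_iff, hve, hue]
  have hpair : ∀ u ∈ U, {e ∈ H.edges | {v, u} ⊆ e}.card ≤ (H.verts.card - 2).choose (r - 2) :=
    fun u hu ↦ by
      have hvu : v ≠ u := fun h ↦ hv (h ▸ hu)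
      simpa [Finset.card_pair hvu] using card_filter_superset_edges_le (H := H) (T := {v, u})
  calc H.deg v ≤ _ := Finset.card_le_card hcover
    _ ≤ _ := Finset.card_union_le _ _
    _ ≤ _ := by gcongr; exacts [le_rfl, Finset.card_biUnion_le_card_mul _ _ _ hpair]

/-- The vertex set `L` is full in `H`: every `r`-set of vertices of `H` meeting `L` is an edge.
The joins `K_t^r ⋈ G` are the `r`-graphs with a full set of `t` vertices. -/
def IsFull (H : HGraph r) (L : Finset ℕ) : Prop :=
  ∀ e ∈ H.verts.powersetCard r, ¬ Disjoint e L → e ∈ H.edges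

theorem card_deleteVerts_add_card_filter :
    (H.deleteVerts L).edges.card + {e ∈ H.edges | ¬ Disjoint e L}.card = H.edges.card :=
  Finset.card_filter_add_card_filter_not _

theorem choose_add_card_filter (hL : L ⊆ H.verts) :
    (H.verts.card - L.card).choose r + {e ∈ H.verts.powersetCard r | ¬ Disjoint e L}.card =
      H.verts.card.choose r := by
  have hdisj : {e ∈ H.verts.powersetCard r | Disjoint e L} = (H.verts \ L).powersetCard r := by
    ext e
    simp only [Finset.mem_filter, Finset.mem_powersetCard, Finset.subset_sdiff]
    tauto
  rw [← Finset.card_sdiff_of_subset hL, ← Finset.card_powersetCard, ← hdisj,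
    Finset.card_filter_add_card_filter_not, Finset.card_powersetCard]

theorem filter_not_disjoint_edges_subset :
    {e ∈ H.edges | ¬ Disjoint e L} ⊆ {e ∈ H.verts.powersetCard r | ¬ Disjoint e L} :=
  Finset.filter_subset_filter _ fun _ ↦ mem_powersetCard_verts

theorem card_edges_add_choose_le (hL : L ⊆ H.verts) :
    H.edges.card + (H.verts.card - L.card).choose r ≤
      (H.deleteVerts L).edges.card + H.verts.card.choose r := by
  have hle := Finset.card_le_card (filter_not_disjoint_edges_subset (H := H) (L := L))
  have hsplit := card_deleteVerts_add_card_filter (H := H) (L := L)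
  have hchoose := choose_add_card_filter hL
  omega

theorem isFull_iff_card_edges (hL : L ⊆ H.verts) :
    H.IsFull L ↔ H.edges.card + (H.verts.card - L.card).choose r =
      (H.deleteVerts L).edges.card + H.verts.card.choose r := by
  have hsplit := card_deleteVerts_add_card_filter (H := H) (L := L)
  have hchoose := choose_add_card_filter hL
  have hsub := filter_not_disjoint_edges_subset (H := H) (L := L)
  have hfull : H.IsFull L ↔
      {e ∈ H.edges | ¬ Disjoint e L} = {e ∈ H.verts.powersetCard r | ¬ Disjoint e L} := by
    refine ⟨fun h ↦ hsub.antisymm fun e he ↦ ?_, fun h e he heL ↦ ?_⟩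
    · obtain ⟨heV, heL⟩ := Finset.mem_filter.1 he
      exact Finset.mem_filter.2 ⟨h e heV heL, heL⟩
    · exact Finset.mem_of_mem_filter e (h.ge (Finset.mem_filter.2 ⟨he, heL⟩))
  rw [hfull]
  refine ⟨fun h ↦ ?_, fun h ↦ Finset.eq_of_subset_of_card_le hsub (by omega)⟩
  rw [h] at hsplit
  omega

end HGraph

/-! ### Relabelling and joins with complete hypergraphs -/

theorem exists_perm_map_eq {α : Type*} {S T : Finset α} (h : S.card = T.card) :
    ∃ σ : Equiv.Perm α, S.map σ.toEmbedding = T := by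
  classical
  have := Set.powersetCard.isPretransitive (α := α) (n := T.card)
  obtain ⟨σ, hσ⟩ := MulAction.exists_smul_eq (Equiv.Perm α)
    (⟨S, h⟩ : Set.powersetCard α T.card) ⟨T, rfl⟩
  refine ⟨σ, ?_⟩
  rw [Finset.map_eq_image]
  exact congrArg Subtype.val hσ

namespace HGraph

variable {r : ℕ} {F G H : HGraph r} {L S e : Finset ℕ}

theorem Iso.isCopyIn (h : G.Iso H) : G.IsCopyIn H := by
  obtain ⟨f, hf, hedges⟩ := h
  exact ⟨f, hf.injOn, fun v hv ↦ hf.mapsTo hv, fun e he ↦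
    (hedges e (mem_powersetCard_verts he)).1 he⟩

theorem Iso.card_verts (h : G.Iso H) : G.verts.card = H.verts.card := by
  obtain ⟨f, hf, -⟩ := h
  exact Finset.card_nbij f hf.mapsTo hf.injOn hf.surjOn

theorem Iso.card_edges (h : G.Iso H) : G.edges.card = H.edges.card := by
  obtain ⟨f, hf, hedges⟩ := h
  refine Finset.card_nbij (Finset.image f)
    (fun e he ↦ (hedges e (mem_powersetCard_verts he)).1 he) (fun e he e' he' hee' ↦ ?_)
    fun e' he' ↦ ?_
  · exact (Finset.image_eq_image_iff_of_injOn hf.injOn (G.edges_sub e he)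
      (G.edges_sub e' he')).1 hee'
  · have hsub : (e' : Set ℕ) ⊆ f '' G.verts := fun v hv ↦ hf.surjOn (H.edges_sub e' he' hv)
    obtain ⟨e, heG, rfl⟩ := Finset.subset_set_image_iff.1 hsub
    have hcard : e.card = r := by
      rw [← H.edges_card _ he', Finset.card_image_of_injOn (hf.injOn.mono heG)]
    exact ⟨e, (hedges e (Finset.mem_powersetCard.2 ⟨heG, hcard⟩)).2 he', rfl⟩

/-- The image of `H` under an injective relabelling of the vertices. -/
def map (f : ℕ ↪ ℕ) (H : HGraph r) : HGraph r where
  verts := H.verts.map f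
  edges := H.edges.map (Finset.mapEmbedding f).toEmbedding
  edges_sub := Finset.forall_mem_map.2 fun e he ↦ Finset.map_subset_map.2 (H.edges_sub e he)
  edges_card := Finset.forall_mem_map.2 fun e he ↦ (Finset.card_map f).trans (H.edges_card e he)

variable {f : ℕ ↪ ℕ}

@[simp]
theorem verts_map : (H.map f).verts = H.verts.map f := rfl

theorem map_mem_edges_map : e.map f ∈ (H.map f).edges ↔ e ∈ H.edges :=
  Finset.mem_map' (Finset.mapEmbedding f).toEmbedding

theorem card_verts_map : (H.map f).verts.card = H.verts.card :=
  Finset.card_map f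

theorem card_edges_map : (H.map f).edges.card = H.edges.card :=
  Finset.card_map _

theorem iso_map : H.Iso (H.map f) := by
  refine ⟨f, ?_, fun e _ ↦ by rw [← Finset.map_eq_image, map_mem_edges_map]⟩
  rw [verts_map, Finset.coe_map]
  exact f.injective.injOn.bijOn_image

theorem map_isCopyIn : (H.map f).IsCopyIn H := by
  have hinv := Function.leftInverse_invFun f.injective
  refine ⟨Function.invFun f, ?_, ?_, ?_⟩
  · rw [verts_map, Finset.coe_map]
    rintro _ ⟨u, -, rfl⟩ _ ⟨v, -, rfl⟩ h
    rw [← hinv u, h, hinv v]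
  · exact Finset.forall_mem_map.2 fun v hv ↦ by rwa [hinv v]
  · refine Finset.forall_mem_map.2 fun e he ↦ ?_
    change (e.map f).image (Function.invFun f) ∈ H.edges
    rwa [Finset.map_eq_image, Finset.image_image, hinv.comp_eq_id, Finset.image_id]

theorem deleteVerts_map : (H.map f).deleteVerts (L.map f) = (H.deleteVerts L).map f := by
  ext e
  · simp only [verts_deleteVerts, verts_map, Finset.map_sdiff]
  · simp only [mem_edges_deleteVerts, map, Finset.mem_map, RelEmbedding.coe_toEmbedding,
      Finset.mapEmbedding_apply]
    constructor
    · rintro ⟨⟨e, he, rfl⟩, hdisj⟩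
      exact ⟨e, ⟨he, (Finset.disjoint_map f).1 hdisj⟩, rfl⟩
    · rintro ⟨e, ⟨he, hdisj⟩, rfl⟩
      exact ⟨⟨e, he, rfl⟩, (Finset.disjoint_map f).2 hdisj⟩

@[simp]
theorem verts_completeOn_join : ((completeOn r S).join G).verts = S ∪ G.verts := rfl

theorem mem_edges_completeOn_join (hr : r ≠ 0) : e ∈ ((completeOn r S).join G).edges ↔
    e ∈ G.edges ∨ e ∈ (S ∪ G.verts).powersetCard r ∧ ¬ Disjoint e S := by
  have hsub := G.edges_sub e
  have hcard := G.edges_card e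
  simp only [join, completeOn, ofEdges, Finset.mem_filter, Finset.mem_union,
    Finset.mem_powersetCard, ← Finset.not_disjoint_iff_nonempty_inter]
  constructor
  · rintro ⟨(heS | heG) | ⟨heV, heS, -⟩, -⟩
    · have hne : e.Nonempty := Finset.card_pos.1 (by omega)
      have heS' : ¬ Disjoint e S := fun h ↦ hne.ne_empty (h.eq_bot_of_le heS.2.1)
      exact Or.inr ⟨⟨heS.2.1.trans Finset.subset_union_left, heS.2.2⟩, heS'⟩
    · exact Or.inl heG
    · exact Or.inr ⟨heV, heS⟩
  · rintro (heG | ⟨heV, heS⟩)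
    · exact ⟨Or.inl (Or.inr heG), (hsub heG).trans Finset.subset_union_right, hcard heG⟩
    · refine ⟨?_, heV⟩
      by_cases heG : Disjoint e G.verts
      · have heS' := heG.left_le_of_le_sup_right heV.1
        exact Or.inl (Or.inl ⟨⟨heS', heV.2⟩, heS', heV.2⟩)
      · exact Or.inr ⟨heV, heS, heG⟩

theorem isFull_completeOn_join (hr : r ≠ 0) : ((completeOn r S).join G).IsFull S :=
  fun _ he heS ↦ (mem_edges_completeOn_join hr).2 (Or.inr ⟨he, heS⟩)

theorem deleteVerts_completeOn_join (hr : r ≠ 0) (h : Disjoint G.verts S) :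
    ((completeOn r S).join G).deleteVerts S = G := by
  ext e
  · rw [verts_deleteVerts, verts_completeOn_join, Finset.union_sdiff_cancel_left h.symm]
  · rw [mem_edges_deleteVerts, mem_edges_completeOn_join hr]
    have : e ∈ G.edges → Disjoint e S := fun he ↦ h.mono_left (G.edges_sub e he)
    tauto

theorem IsFull.completeOn_join_deleteVerts (hr : r ≠ 0) (h : H.IsFull L) (hL : L ⊆ H.verts) :
    (completeOn r L).join (H.deleteVerts L) = H := by
  have hverts : L ∪ H.verts \ L = H.verts := Finset.union_sdiff_of_subset hL
  ext e
  · rw [verts_completeOn_join, verts_deleteVerts, hverts]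
  · rw [mem_edges_completeOn_join hr, mem_edges_deleteVerts, verts_deleteVerts, hverts]
    refine ⟨?_, fun he ↦ ?_⟩
    · rintro (he | ⟨he, heL⟩)
      exacts [he.1, h e he heL]
    · by_cases heL : Disjoint e L
      exacts [Or.inl ⟨he, heL⟩, Or.inr ⟨mem_powersetCard_verts he, heL⟩]

end HGraph

/-! ### Extremal hypergraphs -/

section Extremal

open HGraph

variable {r n t : ℕ} {F G H : HGraph r} {L : Finset ℕ}

theorem HGraph.isCopyIn_of_edges_eq_empty (hF : F.edges = ∅)
    (hle : F.verts.card ≤ H.verts.card) : F.IsCopyIn H := by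
  obtain ⟨f, hmaps, hinj⟩ := F.verts.finite_toSet.exists_injOn_of_encard_le
    (t := (H.verts : Set ℕ)) (by simpa only [Set.encard_coe_eq_coe_finsetCard, Nat.cast_le])
  exact ⟨f, hinj, fun v hv ↦ hmaps hv, by simp [hF]⟩

theorem bddAbove_card_edges (p : HGraph r → Prop) :
    BddAbove {m | ∃ H : HGraph r, H.verts.card = n ∧ p H ∧ H.edges.card = m} := by
  refine ⟨n.choose r, ?_⟩
  rintro _ ⟨H, rfl, -, rfl⟩
  exact card_edges_le_choose

theorem exists_card_edges_eq_sSup {p : HGraph r → Prop} (hG : G.verts.card = n) (hp : p G) :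
    ∃ H : HGraph r, H.verts.card = n ∧ p H ∧
      H.edges.card = sSup {m | ∃ H : HGraph r, H.verts.card = n ∧ p H ∧ H.edges.card = m} :=
  Nat.sSup_mem (s := {m | ∃ H : HGraph r, H.verts.card = n ∧ p H ∧ H.edges.card = m})
    ⟨_, G, hG, hp, rfl⟩ (bddAbove_card_edges p)

theorem card_edges_le_exN (hH : ¬ F.IsCopyIn H) : H.edges.card ≤ exN r H.verts.card F :=
  le_csSup (bddAbove_card_edges _) ⟨H, rfl, hH, rfl⟩

theorem card_edges_le_exMatchN (hH : ¬ F.HasMatching H (t + 1)) :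
    H.edges.card ≤ exMatchN r H.verts.card t F :=
  le_csSup (bddAbove_card_edges _) ⟨H, rfl, hH, rfl⟩

theorem exists_isExtremalFree (hF : F.edges.Nonempty) (n : ℕ) :
    ∃ G : HGraph r, IsExtremalFree r n F G := by
  refine exists_card_edges_eq_sSup (G := emptyOn r (Finset.range n)) (Finset.card_range n) ?_
  rintro ⟨f, -, -, hedges⟩
  obtain ⟨e, he⟩ := hF
  simpa [emptyOn, ofEdges] using hedges e he

theorem IsExtremalFree.map (hG : IsExtremalFree r n F G) (f : ℕ ↪ ℕ) :
    IsExtremalFree r n F (G.map f) :=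
  ⟨card_verts_map.trans hG.1, fun h ↦ hG.2.1 (h.trans map_isCopyIn),
    card_edges_map.trans hG.2.2⟩

theorem exists_isExtremalFree_disjoint (hF : F.edges.Nonempty) (n t : ℕ) :
    ∃ G : HGraph r, IsExtremalFree r n F G ∧ Disjoint G.verts (Finset.range t) := by
  obtain ⟨G, hG⟩ := exists_isExtremalFree hF n
  refine ⟨G.map (addRightEmbedding t), hG.map _, Finset.disjoint_left.2 ?_⟩
  simp

theorem IsExtremalFree.completeOn_join (hr : r ≠ 0) (ht : t ≤ n)
    (hG : IsExtremalFree r (n - t) F G) (hdisj : Disjoint G.verts (Finset.range t)) :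
    ((completeOn r (Finset.range t)).join G).verts.card = n ∧
      ¬ F.HasMatching ((completeOn r (Finset.range t)).join G) (t + 1) ∧
      ((completeOn r (Finset.range t)).join G).edges.card + (n - t).choose r =
        n.choose r + exN r (n - t) F := by
  obtain ⟨hverts, hfree, hedges⟩ := hG
  have hdel := deleteVerts_completeOn_join hr hdisj
  have hcard : ((completeOn r (Finset.range t)).join G).verts.card = n := by
    rw [verts_completeOn_join, Finset.card_union_of_disjoint hdisj.symm, Finset.card_range, hverts,
      Nat.add_sub_cancel' ht]
  refine ⟨hcard, not_hasMatching_of_not_isCopyIn_deleteVerts (Finset.card_range t).le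
    (by rwa [hdel]), ?_⟩
  have hfull := (isFull_iff_card_edges Finset.subset_union_left).1
    (isFull_completeOn_join hr (G := G) (S := Finset.range t))
  rwa [hdel, hcard, Finset.card_range, hedges, add_comm (exN _ _ _)] at hfull

theorem card_edges_add_choose_le_of_cover (hL : L ⊆ H.verts)
    (hfree : ¬ F.IsCopyIn (H.deleteVerts L)) :
    H.edges.card + (H.verts.card - L.card).choose r ≤
      H.verts.card.choose r + exN r (H.verts.card - L.card) F := by
  have hle := card_edges_le_exN hfree
  rw [verts_deleteVerts, Finset.card_sdiff_of_subset hL] at hle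
  have := card_edges_add_choose_le hL
  omega

theorem exists_iso_completeOn_join_of_cover (hr : r ≠ 0) (hL : L ⊆ H.verts)
    (hfree : ¬ F.IsCopyIn (H.deleteVerts L))
    (hcard : H.edges.card + (H.verts.card - L.card).choose r =
      H.verts.card.choose r + exN r (H.verts.card - L.card) F) :
    ∃ G : HGraph r, IsExtremalFree r (H.verts.card - L.card) F G ∧
      Disjoint G.verts (Finset.range L.card) ∧
      H.Iso ((completeOn r (Finset.range L.card)).join G) := by
  have hverts : (H.deleteVerts L).verts.card = H.verts.card - L.card :=
    Finset.card_sdiff_of_subset hL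
  have hedges : (H.deleteVerts L).edges.card = exN r (H.verts.card - L.card) F := by
    refine ((card_edges_le_exN hfree).trans_eq (by rw [hverts])).antisymm ?_
    have := card_edges_add_choose_le hL
    omega
  obtain ⟨σ, hσ⟩ := exists_perm_map_eq (Finset.card_range L.card).symm
  have hdel : (H.map σ.toEmbedding).deleteVerts (Finset.range L.card) =
      (H.deleteVerts L).map σ.toEmbedding := by rw [← deleteVerts_map, hσ]
  have hsub : Finset.range L.card ⊆ (H.map σ.toEmbedding).verts := by
    rw [← hσ]
    exact Finset.map_subset_map.2 hL
  have hfull : (H.map σ.toEmbedding).IsFull (Finset.range L.card) := by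
    rw [isFull_iff_card_edges hsub, hdel, card_edges_map, card_edges_map, card_verts_map,
      Finset.card_range, hcard, hedges, add_comm]
  refine ⟨(H.deleteVerts L).map σ.toEmbedding,
    IsExtremalFree.map ⟨hverts, hfree, hedges⟩ _, ?_, ?_⟩
  · rw [← hdel]
    exact Finset.sdiff_disjoint
  · rw [← hdel, hfull.completeOn_join_deleteVerts hr hsub]
    exact iso_map

/-- Every `n`-vertex `r`-graph without `t + 1` disjoint copies of `F` that has at least as many
edges as the members of `K_t^r ⋈ EX(n-t,F)` has `t` vertices meeting all copies of `F`. The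
edge condition is written without truncated subtraction. -/
def CoverForced (F : HGraph r) (n t : ℕ) : Prop :=
  ∀ H : HGraph r, H.verts.card = n → ¬ F.HasMatching H (t + 1) →
    n.choose r + exN r (n - t) F ≤ H.edges.card + (n - t).choose r →
    ∃ L ⊆ H.verts, L.card = t ∧ ¬ F.IsCopyIn (H.deleteVerts L)

theorem coverForced_zero : CoverForced F n 0 := fun _ _ h _ ↦ by
  simpa using exists_not_isCopyIn_deleteVerts h (by omega)

theorem choose_add_exN_le_exMatchN_add (hr : r ≠ 0) (hF : F.edges.Nonempty) (ht : t ≤ n) :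
    n.choose r + exN r (n - t) F ≤ exMatchN r n t F + (n - t).choose r := by
  obtain ⟨G, hG, hdisj⟩ := exists_isExtremalFree_disjoint hF (n - t) t
  obtain ⟨hverts, hfree, hedges⟩ := hG.completeOn_join hr ht hdisj
  have := card_edges_le_exMatchN hfree
  rw [hverts] at this
  omega

theorem CoverForced.exMatchN_add_choose (h : CoverForced F n t) (hr : r ≠ 0)
    (hF : F.edges.Nonempty) (ht : t ≤ n) :
    exMatchN r n t F + (n - t).choose r = n.choose r + exN r (n - t) F := by
  have hlower := choose_add_exN_le_exMatchN_add hr hF ht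
  obtain ⟨G, hG, hdisj⟩ := exists_isExtremalFree_disjoint hF (n - t) t
  obtain ⟨hverts, hfree, -⟩ := hG.completeOn_join hr ht hdisj
  obtain ⟨H, hH⟩ : ∃ H, IsExtremalMatchingFree r n t F H := exists_card_edges_eq_sSup hverts hfree
  obtain ⟨L, hL, hLcard, hLfree⟩ := h H hH.1 hH.2.1 (hH.2.2 ▸ hlower)
  have := card_edges_add_choose_le_of_cover hL hLfree
  rw [hLcard, hH.1, hH.2.2] at this
  exact this.antisymm hlower

theorem CoverForced.isExtremalMatchingFree_iff (h : CoverForced F n t) (hr : r ≠ 0)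
    (hF : F.edges.Nonempty) (ht : t ≤ n) :
    IsExtremalMatchingFree r n t F H ↔
      ∃ G : HGraph r, IsExtremalFree r (n - t) F G ∧ Disjoint G.verts (Finset.range t) ∧
        H.Iso ((completeOn r (Finset.range t)).join G) := by
  have hvalue := h.exMatchN_add_choose hr hF ht
  refine ⟨fun hH ↦ ?_, ?_⟩
  · obtain ⟨L, hL, hLcard, hLfree⟩ := h H hH.1 hH.2.1 (hH.2.2 ▸ hvalue.ge)
    have := exists_iso_completeOn_join_of_cover hr hL hLfree
    rw [hLcard, hH.1, hH.2.2] at this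
    exact this hvalue
  · rintro ⟨G, hG, hdisj, hiso⟩
    obtain ⟨hverts, hfree, hedges⟩ := hG.completeOn_join hr ht hdisj
    refine ⟨hiso.card_verts.trans hverts, fun h ↦ hfree (h.of_isCopyIn hiso.isCopyIn), ?_⟩
    rw [hiso.card_edges]
    omega

theorem CoverForced.exMatchN_eq (h : CoverForced F n t) (hr : r ≠ 0) (hF : F.edges.Nonempty)
    (ht : t ≤ n) :
    exMatchN r n t F = n.choose r - (n - t).choose r + exN r (n - t) F := by
  have hvalue := h.exMatchN_add_choose hr hF ht
  have hmono := Nat.choose_le_choose r (Nat.sub_le n t)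
  omega

end Extremal

/-! ### Binomial estimates -/

section Estimates

variable {n k u : ℕ}

theorem two_mul_le_of_mul_le {ε : ℝ} (hk : k ≠ 0) (hε : ε ≤ 1 / 2) (h : (u * k : ℝ) ≤ ε * n) :
    2 * u ≤ n := by
  have hk1 : (1 : ℝ) ≤ k := mod_cast Nat.one_le_iff_ne_zero.2 hk
  have : (2 * u : ℝ) ≤ n := by
    calc (2 * u : ℝ) ≤ 2 * (u * k) := by gcongr; exact le_mul_of_one_le_right u.cast_nonneg hk1
      _ ≤ 2 * (1 / 2 * n) := mul_le_mul_of_nonneg_left (h.trans (by gcongr)) zero_le_two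
      _ = n := by ring
  exact_mod_cast this

theorem mul_choose_sub_one (hn : n ≠ 0) (hk : k ≠ 0) :
    n * (n - 1).choose (k - 1) = k * n.choose k := by
  obtain ⟨n, rfl⟩ := Nat.exists_eq_succ_of_ne_zero hn
  obtain ⟨k, rfl⟩ := Nat.exists_eq_succ_of_ne_zero hk
  exact (Nat.add_one_mul_choose_eq n k).trans (mul_comm _ _)

theorem choose_le_choose_sub_one_add (n k : ℕ) :
    n.choose k ≤ (n - 1).choose k + (n - 1).choose (k - 1) := by
  rcases n with _ | n
  · simp
  · rcases k with _ | k
    · simp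
    · simp [Nat.choose_succ_succ, add_comm]

theorem choose_le_choose_sub_add (n k u : ℕ) :
    n.choose k ≤ (n - u).choose k + u * (n - 1).choose (k - 1) := by
  induction u with
  | zero => simp
  | succ u ih =>
    have hstep := choose_le_choose_sub_one_add (n - u) k
    have hmono : (n - u - 1).choose (k - 1) ≤ (n - 1).choose (k - 1) :=
      Nat.choose_le_choose _ (by omega)
    rw [Nat.sub_add_eq, add_one_mul]
    omega

theorem choose_add_mul_choose_le (hk : k ≠ 0) (n s : ℕ) :
    n.choose k + s * n.choose (k - 1) ≤ (n + s).choose k := by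
  obtain ⟨k, rfl⟩ := Nat.exists_eq_succ_of_ne_zero hk
  induction s with
  | zero => simp
  | succ s ih =>
    have hmono : n.choose k ≤ (n + s).choose k := Nat.choose_le_choose _ (Nat.le_add_right n s)
    rw [← add_assoc, Nat.choose_succ_succ, add_one_mul]
    simp only [Nat.succ_eq_add_one, Nat.add_sub_cancel] at ih ⊢
    omega

theorem one_sub_mul_choose_le {ε : ℝ} (hn : n ≠ 0) (hu : (u * k : ℝ) ≤ ε * n) :
    (1 - ε) * n.choose k ≤ (n - u).choose k := by
  have hn' : (0 : ℝ) < n := by positivity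
  rcases eq_or_ne k 0 with rfl | hk
  · have : 0 ≤ ε := nonneg_of_mul_nonneg_left (by simpa using hu) hn'
    simpa
  have hsub : (n.choose k : ℝ) ≤ (n - u).choose k + u * (n - 1).choose (k - 1) :=
    mod_cast choose_le_choose_sub_add n k u
  have hpred : (n : ℝ) * (n - 1).choose (k - 1) = k * n.choose k :=
    mod_cast mul_choose_sub_one hn hk
  refine le_of_mul_le_mul_left ?_ hn'
  calc n * ((1 - ε) * n.choose k) = n * n.choose k - ε * n * n.choose k := by ring
    _ ≤ n * n.choose k - u * k * n.choose k := by gcongr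
    _ = n * (n.choose k - u * (n - 1).choose (k - 1)) := by linear_combination (u : ℝ) * hpred
    _ ≤ n * (n - u).choose k := by gcongr; linarith

theorem mul_one_sub_mul_choose_le {l s : ℕ} {ε : ℝ} (hk : k ≠ 0) (hn : n ≠ 0) (hls : l + s ≤ n)
    (hε : ((l + s : ℕ) * (k - 1 : ℕ) : ℝ) ≤ ε * n) :
    s * ((1 - ε) * n.choose (k - 1)) ≤ ((n - l).choose k : ℝ) - (n - (l + s)).choose k := by
  have hrow : ((n - (l + s)).choose k + s * (n - (l + s)).choose (k - 1) : ℝ) ≤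
      (n - l).choose k := by
    have := choose_add_mul_choose_le hk (n - (l + s)) s
    rw [show n - (l + s) + s = n - l by omega] at this
    exact_mod_cast this
  have hcol := mul_le_mul_of_nonneg_left (one_sub_mul_choose_le hn hε) (s.cast_nonneg : (0 : ℝ) ≤ s)
  linarith

theorem mul_div_le_mul_choose_sub_one_iff {a x : ℝ} (hn : n ≠ 0) (hk : k ≠ 0) :
    k * x / n ≤ a * (n - 1).choose (k - 1) ↔ x ≤ a * n.choose k := by
  have hpred : (n : ℝ) * (n - 1).choose (k - 1) = k * n.choose k :=
    mod_cast mul_choose_sub_one hn hk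
  have hscale : a * (n - 1).choose (k - 1) * n = k * (a * n.choose k) := by
    linear_combination a * hpred
  rw [div_le_iff₀ (by positivity), hscale, mul_le_mul_iff_right₀ (by positivity)]

theorem mul_choose_sub_one_le_mul_div_iff {a x : ℝ} (hn : n ≠ 0) (hk : k ≠ 0) :
    a * (n - 1).choose (k - 1) ≤ k * x / n ↔ a * n.choose k ≤ x := by
  have := mul_div_le_mul_choose_sub_one_iff (a := -a) (x := -x) hn hk
  rwa [mul_neg, neg_div, neg_mul, neg_mul, neg_le_neg_iff, neg_le_neg_iff] at this

theorem mul_mul_le_of_le_div_exp {r m t : ℕ} {a : ℝ} (hr : r ≠ 0) (hm : m ≠ 0) (ha : 0 ≤ a)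
    (ht : t ≤ a * n / (4 * Real.exp 1 * r * m)) : ((t * m : ℕ) * r : ℝ) ≤ a / 8 * n := by
  have he : 2 ≤ Real.exp 1 := by linarith [Real.add_one_le_exp 1]
  have ht' : (t : ℝ) ≤ a * n / (4 * 2 * r * m) := ht.trans (by gcongr)
  rw [le_div_iff₀ (by positivity)] at ht'
  push_cast
  linarith

theorem mul_mul_le_of_le_div_sq {r m t : ℕ} {a : ℝ} (hr : r ≠ 0) (hm : m ≠ 0)
    (ht : t ≤ a * n / (64 * r * m ^ 2)) : ((t * m : ℕ) * r : ℝ) ≤ a / m / 64 * n := by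
  rw [le_div_iff₀ (by positivity)] at ht
  rw [div_div, div_mul_eq_mul_div, le_div_iff₀ (by positivity)]
  push_cast
  linarith

end Estimates

/-! ### Degrees and growth under boundedness and smoothness -/

section Density

open HGraph

variable {r n j s v : ℕ} {F H : HGraph r} {U : Finset ℕ} {p δ c η : ℝ}

/-- The hypotheses on `F` in quantitative form at the single order `j`: `ex(j,F)` is within
`δ * C(j,r)` of `p * C(j,r)`, and `F` is bounded and smooth at `j` with error terms of order
`C(j,r-1)` governed by `c` and `η`. -/
structure RegularAt (F : HGraph r) (p δ c η : ℝ) (j : ℕ) : Prop where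
  le_exN : (p - δ) * j.choose r ≤ exN r j F
  exN_le : exN r j F ≤ (p + δ) * j.choose r
  boundedAt : BoundedAt r j F (c * j.choose (r - 1)) (η / 4 * j.choose (r - 1))
  smoothAt : SmoothAt r j F (η / 8 * j.choose (r - 1))

theorem HasTuranDensity.eventually_regularAt (hp : HasTuranDensity r F p) (hδ : 0 < δ)
    (hF : ∀ᶠ j : ℕ in atTop, BoundedAt r j F (c * j.choose (r - 1)) (η / 4 * j.choose (r - 1)) ∧
      SmoothAt r j F (η / 8 * j.choose (r - 1))) :
    ∀ᶠ j : ℕ in atTop, RegularAt F p δ c η j := by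
  filter_upwards [hF, eventually_ge_atTop r, hp.eventually_const_le (sub_lt_self p hδ),
    hp.eventually_le_const (lt_add_of_pos_right p hδ)] with j hj hrj hlower hupper
  have hpos : (0 : ℝ) < j.choose r := mod_cast Nat.choose_pos hrj
  exact ⟨(le_div_iff₀ hpos).1 hlower, (div_le_iff₀ hpos).1 hupper, hj.1, hj.2⟩

theorem HasTuranDensity.edges_nonempty (h : HasTuranDensity r F p) (hp : 0 < p) :
    F.edges.Nonempty := by
  by_contra hF
  rw [Finset.not_nonempty_iff_eq_empty] at hF
  have hzero : ∀ n ≥ F.verts.card, exN r n F = 0 := fun n hn ↦ by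
    have : {m | ∃ H : HGraph r, H.verts.card = n ∧ ¬ F.IsCopyIn H ∧ H.edges.card = m} = ∅ :=
      Set.eq_empty_of_forall_notMem fun _ ⟨H, hH, hfree, _⟩ ↦
        hfree (isCopyIn_of_edges_eq_empty hF (hH ▸ hn))
    rw [exN, this, csSup_empty, bot_eq_zero]
  obtain ⟨n, hn, hpos⟩ := ((eventually_ge_atTop F.verts.card).and (h.eventually_const_lt hp)).exists
  simp [hzero n hn] at hpos

theorem HGraph.mul_choose_le_card_edges_deleteVerts {a ε : ℝ} (hr : r ≠ 0) (hH : H.verts.card ≠ 0)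
    (hedges : a * H.verts.card.choose r ≤ H.edges.card)
    (hU : (U.card * r : ℝ) ≤ ε * H.verts.card) :
    (a - ε) * (H.verts.card - U.card).choose r ≤ (H.deleteVerts U).edges.card := by
  set n := H.verts.card
  have hn : (0 : ℝ) < n := by positivity
  have hloss : (H.edges.card : ℝ) ≤
      (H.deleteVerts U).edges.card + U.card * (n - 1).choose (r - 1) := by
    have := (H.card_edges_le_add_sum_deg U).trans
      (Nat.add_le_add_left (Finset.sum_le_card_nsmul U _ _ fun _ _ ↦ deg_le_choose) _)
    exact_mod_cast this
  have hpred : (n : ℝ) * (n - 1).choose (r - 1) = r * n.choose r :=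
    mod_cast mul_choose_sub_one hH hr
  have hfew : U.card * (n - 1).choose (r - 1) ≤ ε * n.choose r := by
    refine le_of_mul_le_mul_left ?_ hn
    calc n * (U.card * (n - 1).choose (r - 1) : ℝ) = U.card * r * n.choose r := by
          linear_combination (U.card : ℝ) * hpred
      _ ≤ ε * n * n.choose r := by gcongr
      _ = n * (ε * n.choose r) := by ring
  have hmono : ((n - U.card).choose r : ℝ) ≤ n.choose r :=
    mod_cast Nat.choose_le_choose r (Nat.sub_le _ _)
  rcases le_total 0 (a - ε) with h | h
  · nlinarith [mul_le_mul_of_nonneg_left hmono h]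
  · exact (mul_nonpos_of_nonpos_of_nonneg h (by positivity)).trans (by positivity)

theorem HGraph.deg_le_deg_deleteVerts_add_mul {ε : ℝ} (hr : 2 ≤ r) (hH : H.verts.card ≠ 0)
    (hv : v ∉ U) (hU : (U.card * r : ℝ) ≤ ε * H.verts.card) :
    (H.deg v : ℝ) ≤ (H.deleteVerts U).deg v + ε * H.verts.card.choose (r - 1) := by
  set n := H.verts.card
  have hn : (0 : ℝ) < n := by positivity
  have hloss : (H.deg v : ℝ) ≤ (H.deleteVerts U).deg v + U.card * (n - 2).choose (r - 2) :=
    mod_cast deg_le_deg_deleteVerts_add hv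
  have hpred : (n : ℝ) * (n - 2).choose (r - 2) ≤ r * n.choose (r - 1) := by
    have hmono : (n - 2).choose (r - 2) ≤ (n - 1).choose (r - 2) :=
      Nat.choose_le_choose _ (by omega)
    have hmul := mul_choose_sub_one hH (k := r - 1) (by omega)
    have : n * (n - 2).choose (r - 2) ≤ r * n.choose (r - 1) :=
      calc n * (n - 2).choose (r - 2) ≤ n * (n - 1).choose (r - 2) := by gcongr
        _ = (r - 1) * n.choose (r - 1) := hmul
        _ ≤ r * n.choose (r - 1) := by gcongr; omega
    exact_mod_cast this
  have hfew : U.card * (n - 2).choose (r - 2) ≤ ε * n.choose (r - 1) := by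
    refine le_of_mul_le_mul_left ?_ hn
    calc n * (U.card * (n - 2).choose (r - 2) : ℝ) = U.card * (n * (n - 2).choose (r - 2)) := by
          ring
      _ ≤ U.card * (r * n.choose (r - 1)) := by gcongr
      _ = U.card * r * n.choose (r - 1) := by ring
      _ ≤ ε * n * n.choose (r - 1) := by gcongr
      _ = n * (ε * n.choose (r - 1)) := by ring
  linarith

theorem RegularAt.dN_le (hF : RegularAt F p δ c η j) (hr : r ≠ 0) (hj : j ≠ 0) :
    dN r j F ≤ (p + δ) * (j - 1).choose (r - 1) :=
  (mul_div_le_mul_choose_sub_one_iff hj hr).2 hF.exN_le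

theorem RegularAt.le_dN (hF : RegularAt F p δ c η j) (hr : r ≠ 0) (hj : j ≠ 0) :
    (p - δ) * (j - 1).choose (r - 1) ≤ dN r j F :=
  (mul_choose_sub_one_le_mul_div_iff hj hr).2 hF.le_exN

theorem RegularAt.dN_sub_le_avgDeg_deleteVerts (hF : RegularAt F p δ c η (H.verts.card - U.card))
    (hr : r ≠ 0) (hUH : U ⊂ H.verts) (hδ : 0 ≤ δ) (hδc : δ ≤ c / 8)
    (hedges : (p - δ) * H.verts.card.choose r ≤ H.edges.card)
    (hU : (U.card * r : ℝ) ≤ c / 8 * H.verts.card) :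
    dN r (H.verts.card - U.card) F - c * (H.verts.card - U.card).choose (r - 1) ≤
      (H.deleteVerts U).avgDeg := by
  have hlt : U.card < H.verts.card := Finset.card_lt_card hUH
  have hj : H.verts.card - U.card ≠ 0 := by omega
  have havg := (mul_choose_sub_one_le_mul_div_iff hj hr).2
    (mul_choose_le_card_edges_deleteVerts hr (by omega) hedges hU)
  rw [avgDeg, verts_deleteVerts, Finset.card_sdiff_of_subset hUH.1]
  have hdN := hF.dN_le hr hj
  set j := H.verts.card - U.card
  have hgap : (2 * δ + c / 8) * (j - 1).choose (r - 1) ≤ c * j.choose (r - 1) := by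
    gcongr
    all_goals first | exact Nat.sub_le j 1 | linarith
  linarith

theorem RegularAt.isCopyIn_deleteVerts (hF : RegularAt F p δ c η (H.verts.card - U.card))
    (hr : 2 ≤ r) (hrH : r ≤ H.verts.card) (hp : 0 ≤ p) (hδ : 0 ≤ δ) (hη : 0 < η)
    (hδc : δ ≤ c / 8) (hδη : δ ≤ η / 8)
    (hedges : (p - δ) * H.verts.card.choose r ≤ H.edges.card) (hUH : U ⊆ H.verts)
    (hUc : (U.card * r : ℝ) ≤ c / 8 * H.verts.card)
    (hUη : (U.card * r : ℝ) ≤ η / 64 * H.verts.card) (hvH : v ∈ H.verts) (hvU : v ∉ U)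
    (hdeg : (p + η / 2) * H.verts.card.choose (r - 1) ≤ H.deg v) :
    F.IsCopyIn (H.deleteVerts U) := by
  by_contra hfree
  have hssub : U ⊂ H.verts := Finset.ssubset_iff_subset_ne.2 ⟨hUH, fun h ↦ hvU (h ▸ hvH)⟩
  have hlt := Finset.card_lt_card hssub
  have hmax := hF.boundedAt _ (Finset.card_sdiff_of_subset hUH) hfree
    (hF.dN_sub_le_avgDeg_deleteVerts (by omega) hssub hδ hδc hedges hUc)
  have hdegmax : ((H.deleteVerts U).deg v : ℝ) ≤ (H.deleteVerts U).maxDeg :=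
    mod_cast deg_le_maxDeg (Finset.mem_sdiff.2 ⟨hvH, hvU⟩)
  have hloss := deg_le_deg_deleteVerts_add_mul hr (by omega) hvU hUη
  have hdN := hF.dN_le (by omega) (by omega)
  set n := H.verts.card
  set j := n - U.card
  have hpos : (0 : ℝ) < n.choose (r - 1) := mod_cast Nat.choose_pos (by omega)
  have hchain : (p + η / 2) * n.choose (r - 1) ≤ (p + η / 8 + η / 4 + η / 64) * n.choose (r - 1) :=
    calc (p + η / 2) * n.choose (r - 1)
        ≤ (p + δ) * (j - 1).choose (r - 1) + η / 4 * j.choose (r - 1) +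
          η / 64 * n.choose (r - 1) := by linarith
      _ ≤ (p + η / 8) * n.choose (r - 1) + η / 4 * n.choose (r - 1) +
          η / 64 * n.choose (r - 1) := by gcongr <;> omega
      _ = _ := by ring
  linarith [le_of_mul_le_mul_right hchain hpos]

theorem RegularAt.mul_choose_le_exN_add_one_sub (hj : RegularAt F p δ c η j)
    (hj' : RegularAt F p δ c η (j + 1)) (hr : r ≠ 0) (hp : p ≤ 1) (hη : 0 ≤ η) (hδη : δ ≤ η / 8)
    (hj0 : j ≠ 0) (hjn : j + 1 ≤ n) (hloss : ((n - j + 1 : ℕ) * (r - 1 : ℕ) : ℝ) ≤ η / 32 * n) :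
    (p - 9 / 32 * η) * n.choose (r - 1) ≤ exN r (j + 1) F - exN r j F := by
  have hdN := hj.le_dN hr hj0
  have hsmooth : dN r j F - η / 8 * (j + 1).choose (r - 1) ≤ exN r (j + 1) F - exN r j F := by
    have := (abs_le.1 hj'.smoothAt).1
    rw [deltaN, Nat.add_sub_cancel] at this
    linarith
  have hlow : (1 - η / 32) * n.choose (r - 1) ≤ (j - 1).choose (r - 1) := by
    have := one_sub_mul_choose_le (by omega) hloss
    rwa [show n - (n - j + 1) = j - 1 by omega] at this
  have hpred : ((j - 1).choose (r - 1) : ℝ) ≤ n.choose (r - 1) :=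
    mod_cast Nat.choose_le_choose _ (by omega)
  have hsucc : ((j + 1).choose (r - 1) : ℝ) ≤ n.choose (r - 1) :=
    mod_cast Nat.choose_le_choose _ hjn
  have hpX : (1 - p) * (j - 1).choose (r - 1) ≤ (1 - p) * n.choose (r - 1) := by
    gcongr
  have hδX : δ * (j - 1).choose (r - 1) ≤ η / 8 * n.choose (r - 1) := by gcongr
  have hηX : η / 8 * (j + 1).choose (r - 1) ≤ η / 8 * n.choose (r - 1) := by gcongr
  linarith

theorem RegularAt.mul_choose_le_exN_add_sub (hF : ∀ i, j ≤ i → RegularAt F p δ c η i) (hr : r ≠ 0)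
    (hp : p ≤ 1) (hη : 0 ≤ η) (hδη : δ ≤ η / 8) (hj0 : j ≠ 0) (hjn : j + s ≤ n)
    (hloss : ((n - j + 1 : ℕ) * (r - 1 : ℕ) : ℝ) ≤ η / 32 * n) :
    s * ((p - 9 / 32 * η) * n.choose (r - 1)) ≤ exN r (j + s) F - exN r j F := by
  induction s with
  | zero => simp
  | succ s ih =>
    have hloss' : ((n - (j + s) + 1 : ℕ) * (r - 1 : ℕ) : ℝ) ≤ η / 32 * n :=
      le_trans (by gcongr; omega) hloss
    have hstep := (hF (j + s) (by omega)).mul_choose_le_exN_add_one_sub (hF (j + s + 1) (by omega))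
      hr hp hη hδη (by omega) (by omega) hloss'
    have := ih (by omega)
    push_cast
    rw [← add_assoc]
    linarith

end Density

/-! ### Covers of nearly extremal hypergraphs -/

section Cover

open HGraph

variable {r n k l m t : ℕ} {F H : HGraph r} {L : Finset ℕ} {p δ c η : ℝ}

theorem HGraph.exists_not_isCopyIn_deleteVerts_of_absorbing (hF : 0 < F.verts.card)
    (hL : ∀ v ∈ L, ∀ U ⊆ H.verts, U.card ≤ t * F.verts.card → v ∉ U →
      F.IsCopyIn (H.deleteVerts U))
    (hLH : L ⊆ H.verts) (ht : t * F.verts.card ≤ H.verts.card) (h : ¬ F.HasMatching H (t + 1)) :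
    L.card ≤ t ∧ ∃ B ⊆ H.verts \ L, B.card = (t - L.card) * F.verts.card ∧
      ¬ F.IsCopyIn ((H.deleteVerts L).deleteVerts B) := by
  have hLt : L.card ≤ t := by
    by_contra! hlt
    obtain ⟨T, hTL, hT⟩ := Finset.exists_subset_card_eq (Nat.succ_le_of_lt hlt)
    have := HasMatching.absorb hF (fun v hv ↦ hL v (hTL hv)) (hTL.trans hLH)
      hasMatching_zero hT.le
    rw [hT] at this
    exact h this
  have hrest : ¬ F.HasMatching (H.deleteVerts L) (t - L.card + 1) := fun hmatch ↦ by
    have := HasMatching.absorb hF hL hLH hmatch (by omega)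
    rw [← add_assoc, Nat.add_sub_cancel' hLt] at this
    exact h this
  refine ⟨hLt, exists_not_isCopyIn_deleteVerts hrest ?_⟩
  rw [verts_deleteVerts, Finset.card_sdiff_of_subset hLH, Nat.sub_mul]
  have := Nat.le_mul_of_pos_right L.card hF
  omega

theorem RegularAt.exN_add_mul_add_choose_lt
    (hF : ∀ i, n - (l + k * m) ≤ i → RegularAt F p δ c η i) (hr : r ≠ 0) (hrn : r ≤ n)
    (hp : 0 ≤ p) (hη : 0 < η) (hmη : m * η ≤ 1 - p) (hδη : δ ≤ η / 8) (hk : k ≠ 0) (hm : m ≠ 0)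
    (hloss : (((l + k) * m : ℕ) * r : ℝ) ≤ η / 64 * n) :
    exN r (n - (l + k * m)) F + (k * m : ℕ) * ((p + η / 2) * n.choose (r - 1)) +
        (n - (l + k)).choose r <
      (n - l).choose r + exN r (n - (l + k)) F := by
  have hm1 : (1 : ℝ) ≤ m := mod_cast Nat.one_le_iff_ne_zero.2 hm
  have hX : (0 : ℝ) < n.choose (r - 1) := mod_cast Nat.choose_pos (by omega)
  have hkX : 0 < k * (n.choose (r - 1) : ℝ) := by positivity
  have htm : l + k * m ≤ (l + k) * m := by
    rw [add_mul]; gcongr; exact Nat.le_mul_of_pos_right l (by omega)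
  have htm' : l + k ≤ (l + k) * m := Nat.le_mul_of_pos_right _ (by omega)
  have htm_pos : 1 ≤ (l + k) * m := by omega
  have hη1 : η ≤ 1 := (le_mul_of_one_le_left hη.le hm1).trans (by linarith)
  have hhalf : 2 * ((l + k) * m) ≤ n := two_mul_le_of_mul_le hr (by linarith) hloss
  have hlarge : k * ((1 - η / 64) * n.choose (r - 1)) ≤
      ((n - l).choose r : ℝ) - (n - (l + k)).choose r :=
    mul_one_sub_mul_choose_le hr (by omega) (by omega)
      (le_trans (by gcongr; exact Nat.sub_le r 1) hloss)
  have hgrowth : (k * (m - 1)) * ((p - 9 / 32 * η) * n.choose (r - 1)) ≤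
      exN r (n - (l + k)) F - exN r (n - (l + k * m)) F := by
    have hkm : l + k + k * (m - 1) = l + k * m := by
      obtain ⟨m, rfl⟩ := Nat.exists_eq_succ_of_ne_zero hm
      simp only [Nat.succ_eq_add_one, Nat.add_sub_cancel]
      ring
    have hloss' : ((n - (n - (l + k * m)) + 1 : ℕ) * (r - 1 : ℕ) : ℝ) ≤ η / 32 * n :=
      calc ((n - (n - (l + k * m)) + 1 : ℕ) * (r - 1 : ℕ) : ℝ)
          ≤ (2 * ((l + k) * m) : ℕ) * r := by gcongr <;> omega
        _ = 2 * (((l + k) * m : ℕ) * r) := by push_cast; ring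
        _ ≤ η / 32 * n := by linarith
    have := mul_choose_le_exN_add_sub (s := k * (m - 1)) hF hr (by nlinarith) hη.le hδη
      (by omega) (by omega) hloss'
    rw [show n - (l + k * m) + k * (m - 1) = n - (l + k) by omega] at this
    rwa [Nat.cast_mul, Nat.cast_pred (by omega)] at this
  have hgain : m * (p + η / 2) < 1 - η / 64 + (m - 1) * (p - 9 / 32 * η) := by nlinarith
  have := mul_lt_mul_of_pos_left hgain hkX
  push_cast
  linarith

theorem HGraph.card_edges_le_exN_add_mul {B : Finset ℕ} {d : ℝ} (hB : B ⊆ H.verts)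
    (hfree : ¬ F.IsCopyIn (H.deleteVerts B)) (hdeg : ∀ u ∈ B, (H.deg u : ℝ) ≤ d) :
    (H.edges.card : ℝ) ≤ exN r (H.verts.card - B.card) F + B.card * d := by
  have hex := card_edges_le_exN hfree
  rw [verts_deleteVerts, Finset.card_sdiff_of_subset hB] at hex
  have hsplit : (H.edges.card : ℝ) ≤
      exN r (H.verts.card - B.card) F + ∑ u ∈ B, (H.deg u : ℝ) :=
    mod_cast (H.card_edges_le_add_sum_deg B).trans (Nat.add_le_add_right hex _)
  have hsum := Finset.sum_le_card_nsmul B _ _ hdeg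
  rw [nsmul_eq_mul] at hsum
  linarith

theorem RegularAt.mul_choose_le_of_choose_add_exN_le {x : ℝ} (hF : RegularAt F p δ c η (n - t))
    (hpδ : p - δ ≤ 1) (hx : n.choose r + exN r (n - t) F ≤ x + (n - t).choose r) :
    (p - δ) * n.choose r ≤ x := by
  have hmono : ((n - t).choose r : ℝ) ≤ n.choose r :=
    mod_cast Nat.choose_le_choose r (Nat.sub_le n t)
  have := mul_le_mul_of_nonneg_left hmono (sub_nonneg.2 hpδ)
  linarith [hF.le_exN]

theorem RegularAt.exists_cover
    (hF : ∀ i, H.verts.card - t * F.verts.card ≤ i → RegularAt F p δ c η i)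
    (hr : 2 ≤ r) (hrH : r ≤ H.verts.card) (hF0 : 0 < F.verts.card) (hp : 0 ≤ p) (hδ : 0 ≤ δ)
    (hη : 0 < η) (hδc : δ ≤ c / 8) (hδη : δ ≤ η / 8) (hpη : F.verts.card * η ≤ 1 - p)
    (htc : ((t * F.verts.card : ℕ) * r : ℝ) ≤ c / 8 * H.verts.card)
    (htη : ((t * F.verts.card : ℕ) * r : ℝ) ≤ η / 64 * H.verts.card)
    (htH : t * F.verts.card ≤ H.verts.card) (h : ¬ F.HasMatching H (t + 1))
    (hedges : H.verts.card.choose r + exN r (H.verts.card - t) F ≤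
      H.edges.card + (H.verts.card - t).choose r) :
    ∃ L ⊆ H.verts, L.card = t ∧ ¬ F.IsCopyIn (H.deleteVerts L) := by
  set m := F.verts.card
  set n := H.verts.card with hn
  have hedges' : (n.choose r + exN r (n - t) F : ℝ) ≤ H.edges.card + (n - t).choose r :=
    mod_cast hedges
  have htm : t ≤ t * m := Nat.le_mul_of_pos_right _ hF0
  have hpδ : p - δ ≤ 1 := by nlinarith [(m.cast_nonneg : (0 : ℝ) ≤ m)]
  have hdense := (hF (n - t) (by omega)).mul_choose_le_of_choose_add_exN_le hpδ hedges'
  set L := {v ∈ H.verts | (p + η / 2) * n.choose (r - 1) ≤ H.deg v}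
  have hLH : L ⊆ H.verts := Finset.filter_subset _ _
  have habsorb : ∀ v ∈ L, ∀ U ⊆ H.verts, U.card ≤ t * m → v ∉ U → F.IsCopyIn (H.deleteVerts U) :=
    fun v hv U hUH hU hvU ↦ by
      obtain ⟨hvH, hdeg⟩ := Finset.mem_filter.1 hv
      exact (hF _ (by omega)).isCopyIn_deleteVerts hr hrH hp hδ hη hδc hδη hdense hUH
        (le_trans (by gcongr) htc) (le_trans (by gcongr) htη) hvH hvU hdeg
  obtain ⟨hLt, B, hBH, hB, hfree⟩ :=
    exists_not_isCopyIn_deleteVerts_of_absorbing hF0 habsorb hLH htH h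
  obtain ⟨k, rfl⟩ := Nat.exists_eq_add_of_le hLt
  rw [Nat.add_sub_cancel_left] at hB
  rcases eq_or_ne k 0 with rfl | hk
  · refine ⟨L, hLH, rfl, ?_⟩
    rwa [Finset.card_eq_zero.1 (hB.trans (zero_mul m)), deleteVerts_empty] at hfree
  have hlow : ∀ u ∈ B, ((H.deleteVerts L).deg u : ℝ) ≤ (p + η / 2) * n.choose (r - 1) :=
    fun u hu ↦ by
      obtain ⟨huH, huL⟩ := Finset.mem_sdiff.1 (hBH hu)
      have hdeg : (H.deleteVerts L).deg u ≤ H.deg u := deleteVerts_isSubgraph.deg_le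
      exact le_trans (mod_cast hdeg) (le_of_not_ge fun hge ↦
        huL (Finset.mem_filter.2 ⟨huH, hge⟩))
  have hrest := card_edges_le_exN_add_mul hBH hfree hlow
  rw [verts_deleteVerts, Finset.card_sdiff_of_subset hLH, hB, ← hn, Nat.sub_sub] at hrest
  have hlost : (H.edges.card + (n - L.card).choose r : ℝ) ≤
      (H.deleteVerts L).edges.card + n.choose r := mod_cast card_edges_add_choose_le hLH
  have hcount := exN_add_mul_add_choose_lt (l := L.card) (k := k) (fun i hi ↦ hF i (le_trans ?_ hi))
    (by omega) hrH hp hη hpη hδη hk hF0.ne' htη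
  · linarith
  · have := Nat.le_mul_of_pos_right L.card hF0
    rw [add_mul]
    omega

theorem HasTuranDensity.eventually_coverForced (h : HasTuranDensity r F p)
    (hF0 : 0 < F.verts.card) (hr : 2 ≤ r) (hp : 0 ≤ p) (hp1 : p < 1) (hc : 0 < c)
    (hF : ∀ᶠ j : ℕ in atTop,
      BoundedAt r j F (c * j.choose (r - 1)) ((1 - p) / F.verts.card / 4 * j.choose (r - 1)) ∧
      SmoothAt r j F ((1 - p) / F.verts.card / 8 * j.choose (r - 1))) :
    ∀ᶠ n : ℕ in atTop, ∀ t : ℕ, ((t * F.verts.card : ℕ) * r : ℝ) ≤ c / 8 * n →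
      ((t * F.verts.card : ℕ) * r : ℝ) ≤ (1 - p) / F.verts.card / 64 * n →
      t ≤ n ∧ CoverForced F n t := by
  have hm1 : (1 : ℝ) ≤ F.verts.card := mod_cast hF0
  have hpη : F.verts.card * ((1 - p) / F.verts.card) = 1 - p := by field_simp
  have hη1 : (1 - p) / F.verts.card ≤ 1 := div_le_one_of_le₀ (by linarith) (by linarith)
  have hη : 0 < (1 - p) / F.verts.card := div_pos (by linarith) (by linarith)
  have hδ : 0 < min (c / 8) ((1 - p) / F.verts.card / 8) := by positivity
  obtain ⟨N, hN⟩ := eventually_atTop.1 (h.eventually_regularAt hδ hF)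
  filter_upwards [eventually_ge_atTop (2 * N), eventually_ge_atTop r] with n hnN hnr t htc htη
  have hhalf : 2 * (t * F.verts.card) ≤ n :=
    two_mul_le_of_mul_le (by omega) (by linarith) htη
  have := Nat.le_mul_of_pos_right t hF0
  refine ⟨by omega, ?_⟩
  rintro H rfl hmatch hedges
  exact RegularAt.exists_cover (fun i hi ↦ hN i (by omega)) hr hnr hF0 hp hδ.le hη
    (min_le_left _ _) (min_le_right _ _) hpη.le htc htη (by omega) hmatch hedges

end Cover

/-- the general density Corrádi–Hajnal theorem for a nondegenerate
bounded & smooth `r`-graph `F`. -/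
theorem statement_0 (m r : ℕ) (hr : 2 ≤ r) (hrm : r ≤ m)
    (F : HGraph r) (hFm : F.verts.card = m)
    (π : ℝ) (hπ : HasTuranDensity r F π) (hπ0 : 0 < π)
    (c : ℝ) (hc : 0 < c)
    (hcond : ∀ᶠ n : ℕ in atTop,
      BoundedAt r n F (c * (n.choose (r-1) : ℝ))
        ((1 - π) / (4 * m) * (n.choose (r-1) : ℝ)) ∧
      SmoothAt r n F ((1 - π) / (8 * m) * (n.choose (r-1) : ℝ))) :
    ∃ N₀ : ℕ, ∀ n : ℕ, N₀ ≤ n → ∀ t : ℕ,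
      (t : ℝ) ≤ min (c * n / (4 * Real.exp 1 * r * m)) ((1 - π) * n / (64 * r * m ^ 2)) →
      (∀ H : HGraph r, IsExtremalMatchingFree r n t F H ↔
          ∃ G : HGraph r, IsExtremalFree r (n - t) F G ∧
            Disjoint G.verts (Finset.range t) ∧
            H.Iso ((completeOn r (Finset.range t)).join G)) ∧
      exMatchN r n t F = n.choose r - (n - t).choose r + exN r (n - t) F := by
  have hF := hπ.edges_nonempty hπ0
  suffices hcover : ∀ᶠ n : ℕ in atTop, ∀ t : ℕ,
      (t : ℝ) ≤ min (c * n / (4 * Real.exp 1 * r * m)) ((1 - π) * n / (64 * r * m ^ 2)) →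
      t ≤ n ∧ CoverForced F n t by
    obtain ⟨N₀, hN₀⟩ := eventually_atTop.1 hcover
    refine ⟨N₀, fun n hn t ht ↦ ?_⟩
    obtain ⟨htn, hforced⟩ := hN₀ n hn t ht
    exact ⟨fun H ↦ hforced.isExtremalMatchingFree_iff (by omega) hF htn,
      hforced.exMatchN_eq (by omega) hF htn⟩
  rcases le_or_gt 1 π with hπ1 | hπ1
  · refine Eventually.of_forall fun n t ht ↦ ?_
    have hle : (1 - π) * n ≤ 0 := mul_nonpos_of_nonpos_of_nonneg (by linarith) n.cast_nonneg
    obtain rfl : t = 0 := Nat.cast_nonpos.1 <|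
      (ht.trans (min_le_right _ _)).trans (div_nonpos_of_nonpos_of_nonneg hle (by positivity))
    exact ⟨n.zero_le, coverForced_zero⟩
  · subst hFm
    have hm : F.verts.card ≠ 0 := by omega
    simp only [mul_comm _ (F.verts.card : ℝ), ← div_div] at hcond
    filter_upwards [hπ.eventually_coverForced (by omega) hr hπ0.le hπ1 hc hcond] with n hn t ht
    obtain ⟨htc, htη⟩ := le_min_iff.1 ht
    exact hn t (mul_mul_le_of_le_div_exp (by omega) hm hc.le htc)
      (mul_mul_le_of_le_div_sq (by omega) hm htη)

end DensityCH
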